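/- arXiv:2110.01332 — 3 statements merged into one kernel-verified Lean document; each statement's English description precedes it below -/
import Mathlib

section
/- Suppose (X, Σ, μ) satisfies condition (⋆): whenever (X_n) is an increasing sequence of measurable sets with μ(X_n) < ∞ for all n and ⋃_n X_n = X, every measurable set A with μ(A) < ∞ is contained in X_n for some n. If moreover u·w is μ-integrable, then for every A ∈ 𝒜 with μ(A) < ∞ one has ∫_A |μ[u·w|𝒜]|² dμ < ∞ (i.e. L²(𝒜) is contained in the domain of the operator f ↦ μ[w·u·f|𝒜]). -/
open MeasureTheory

/-- Under condition (⋆), if `u·w` is integrable then for every `A ∈ 𝒜` of finite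
measure, `∫_A |μ[u·w|𝒜]|² dμ < ∞`, i.e. `L²(𝒜) ⊆ 𝒟(EM_{wu})`. -/
theorem L2_subset_domain_of_star
    {X : Type*} {m0 : MeasurableSpace X} (μ : Measure X) [SigmaFinite μ]
    (m : MeasurableSpace X) (hm : m ≤ m0) [SigmaFinite (μ.trim hm)]
    (u w : X → ℂ) (hu : Measurable u) (hw : Measurable w)
    (hu2 : Integrable (fun x => ‖u x‖ ^ 2) μ)
    (hw2 : Integrable (fun x => ‖w x‖ ^ 2) μ)
    (hstar : ∀ Xn : ℕ → Set X, (∀ n, MeasurableSet[m0] (Xn n)) → Monotone Xn →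
      (∀ n, μ (Xn n) < ⊤) → (⋃ n, Xn n) = Set.univ →
      ∀ A : Set X, MeasurableSet[m0] A → μ A < ⊤ → ∃ n, A ⊆ Xn n)
    (huw : Integrable (fun x => u x * w x) μ) :
    ∀ A : Set X, MeasurableSet[m] A → μ A < ⊤ →
      ∫⁻ x in A, (‖(μ[fun y => u y * w y|m]) x‖₊ : ENNReal) ^ 2 ∂μ < ⊤ := by
  intro A hA hAfin
  set g : X → ℂ := μ[fun y => u y * w y|m] with hg
  have hgm : StronglyMeasurable[m0] g := stronglyMeasurable_condExp.mono hm
  have hgn : Measurable[m0] (fun x => ‖g x‖) := hgm.norm.measurable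
  obtain ⟨n, hn⟩ := hstar (fun n => spanningSets μ n ∩ {x | ‖g x‖ ≤ (n : ℝ)})
    (fun n => (measurableSet_spanningSets μ n).inter (measurableSet_le hgn measurable_const))
    (fun i j hij x hx => ⟨monotone_spanningSets μ hij hx.1,
      (show ‖g x‖ ≤ (j : ℝ) from le_trans (show ‖g x‖ ≤ (i : ℝ) from hx.2) (Nat.cast_le.mpr hij))⟩)
    (fun n => lt_of_le_of_lt (measure_mono Set.inter_subset_left)
      (measure_spanningSets_lt_top μ n))
    (by
      refine Set.eq_univ_of_forall fun x => ?_
      obtain ⟨k, hk⟩ := exists_nat_ge ‖g x‖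
      have hx : x ∈ ⋃ i, spanningSets μ i := by rw [iUnion_spanningSets]; trivial
      obtain ⟨i, hi⟩ := Set.mem_iUnion.mp hx
      exact Set.mem_iUnion.mpr ⟨max i k, monotone_spanningSets μ (le_max_left i k) hi,
        (show ‖g x‖ ≤ ((max i k : ℕ) : ℝ) from
          le_trans hk (Nat.cast_le.mpr (le_max_right i k)))⟩)
    A (hm A hA) hAfin
  calc ∫⁻ x in A, (‖g x‖₊ : ENNReal) ^ 2 ∂μ
      ≤ ∫⁻ _ in A, (n : ENNReal) ^ 2 ∂μ := by
        refine setLIntegral_mono measurable_const fun x hx => ?_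
        have h1 : ‖g x‖₊ ≤ (n : NNReal) := by
          have h2 : ‖g x‖ ≤ (n : ℝ) := (hn hx).2
          exact_mod_cast h2
        have h3 : (‖g x‖₊ : ENNReal) ≤ (n : ENNReal) := by exact_mod_cast h1
        gcongr
    _ = (n : ENNReal) ^ 2 * μ A := setLIntegral_const _ _
    _ < ⊤ := ENNReal.mul_lt_top (ENNReal.pow_lt_top (ENNReal.natCast_lt_top n)) hAfin
end

section
/- Let H be a complex Hilbert space and T : H →ₗ.[ℂ] H a densely defined unbounded operator (LinearPMap) whose graph is closed. Then I + T*T is surjective in the following sense: for every h ∈ H there exists x in the domain of T such that T x lies in the domain of the adjoint T* and x + T*(T x) = h. -/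
open MeasureTheory

/-- For a closed densely defined operator `T` on a complex Hilbert space, the
operator `I + T*T` is surjective: every `h ∈ H` can be written as `x + T*(T x)`
with `x` in the domain of `T` and `T x` in the domain of `T*`. -/
theorem id_add_adjoint_comp_surjective
    {H : Type*} [NormedAddCommGroup H] [InnerProductSpace ℂ H] [CompleteSpace H]
    (T : H →ₗ.[ℂ] H) (hT : Dense (T.domain : Set H)) (hclosed : T.IsClosed)
    (h : H) :
    ∃ (x : T.domain) (hx : (T x : H) ∈ T.adjoint.domain),
      (x : H) + T.adjoint ⟨T x, hx⟩ = h := by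
  let G : Submodule ℂ (WithLp 2 (H × H)) :=
    T.graph.comap (WithLp.linearEquiv 2 ℂ (H × H)).toLinearMap
  have hG : IsClosed (G : Set (WithLp 2 (H × H))) :=
    IsClosed.preimage (WithLp.prod_continuous_ofLp 2 H H) hclosed
  haveI : CompleteSpace G := hG.completeSpace_coe
  obtain ⟨p, hp, hperp⟩ : ∃ p ∈ G, WithLp.toLp 2 (h, (0 : H)) - p ∈ Gᗮ :=
    ⟨_, (G.orthogonalProjection (WithLp.toLp 2 (h, (0 : H)))).2,
      G.sub_starProjection_mem_orthogonal _⟩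
  have hp' : WithLp.ofLp p ∈ T.graph := hp
  rw [LinearPMap.mem_graph_iff] at hp'
  obtain ⟨x, hx1, hx2⟩ := hp'
  have key : ∀ v : T.domain, inner ℂ (h - (x : H)) (v : H) = inner ℂ (T x) (T v) := by
    intro v
    have hv : WithLp.toLp 2 ((v : H), T v) ∈ G := T.mem_graph v
    have := (Submodule.mem_orthogonal' G _).1 hperp _ hv
    rw [WithLp.prod_inner_apply] at this
    simp only [WithLp.ofLp_sub, Prod.fst_sub, Prod.snd_sub, ← hx1, ← hx2, zero_sub,
      inner_neg_left] at this
    exact add_neg_eq_zero.1 this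
  have hx : T x ∈ T.adjoint.domain := LinearPMap.mem_adjoint_domain_of_exists _ ⟨_, key⟩
  refine ⟨x, hx, ?_⟩
  rw [LinearPMap.adjoint_apply_eq hT ⟨T x, hx⟩ key]
  abel
end

section
/- Let H be a complex Hilbert space, T : H →ₗ.[ℂ] H a densely defined unbounded operator (LinearPMap) with closed graph, and f ∈ H. Suppose that for each λ > 0 there is u_λ in the domain of T satisfying the normal equation ⟪T u_λ − f, T v⟫ + λ⟪u_λ, v⟫ = 0 for all v in the domain of T. Suppose y is a minimal-norm solution of T u = f, i.e. y lies in the domain of T, T y = f, and ‖y‖ ≤ ‖z‖ for every z in the domain of T with T z = f. Then u_λ converges to y in H as λ → 0⁺ (convergence of λ ↦ u_λ along the filter of positive reals tending to 0). -/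
open MeasureTheory Filter

/-- Convergence of Tikhonov regularized solutions: if `u_λ` solves the normal
equation `⟪T u_λ − f, T v⟫ + λ⟪u_λ, v⟫ = 0` for all `v` in the domain of `T`, and
`y` is a minimal-norm solution of `T u = f`, then `u_λ → y` as `λ → 0⁺`. -/
theorem tikhonov_converges_to_minimal_norm_solution
    {H : Type*} [NormedAddCommGroup H] [InnerProductSpace ℂ H] [CompleteSpace H]
    (T : H →ₗ.[ℂ] H) (hT : Dense (T.domain : Set H)) (hclosed : T.IsClosed)
    (f : H) (ulam : ℝ → T.domain)
    (hnormal : ∀ lam : ℝ, 0 < lam → ∀ v : T.domain,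
      inner (𝕜 := ℂ) ((T (ulam lam) : H) - f) (T v : H) +
        (lam : ℂ) * inner (𝕜 := ℂ) ((ulam lam : H)) ((v : H)) = 0)
    (y : T.domain) (hy : (T y : H) = f)
    (hy_min : ∀ z : T.domain, (T z : H) = f → ‖(y : H)‖ ≤ ‖(z : H)‖) :
    Tendsto (fun lam : ℝ => ((ulam lam : H)))
      (nhdsWithin 0 (Set.Ioi 0)) (nhds (y : H)) := by
  have hre : ∀ lam : ℝ, 0 < lam → ∀ v : T.domain,
      (inner (𝕜 := ℂ) ((T (ulam lam) : H) - f) (T v : H)).re +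
        lam * (inner (𝕜 := ℂ) ((ulam lam : H)) ((v : H))).re = 0 := by
    intro lam hl v
    have h := congrArg Complex.re (hnormal lam hl v)
    simpa using h
  have hsq : ∀ p q : H, ‖p - q‖ ^ 2 = ‖p‖ ^ 2 - ‖q‖ ^ 2 - 2 * (inner ℂ q (p - q)).re := by
    intro p q
    have h := norm_add_sq (𝕜 := ℂ) q (p - q)
    rw [add_sub_cancel] at h
    simp only [RCLike.re_to_complex] at h
    linarith
  have hself : ∀ p : H, (inner ℂ p p).re = ‖p‖ ^ 2 := by
    intro p
    exact inner_self_eq_norm_sq (𝕜 := ℂ) p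
  -- comparison with y
  have hbd : ∀ lam : ℝ, 0 < lam → ‖(T (ulam lam) : H) - f‖ ^ 2 ≤ lam * ‖(y : H)‖ ^ 2 ∧
      ‖(ulam lam : H)‖ ^ 2 ≤ ‖(y : H)‖ ^ 2 := by
    intro lam hl
    have h := hre lam hl (ulam lam - y)
    rw [T.map_sub, hy, hself] at h
    have h2 := hsq (y : H) (ulam lam : H)
    have h3 : (inner ℂ (ulam lam : H) ((ulam lam - y : T.domain) : H)).re
        = - (inner ℂ (ulam lam : H) ((y : H) - (ulam lam : H))).re := by
      rw [← Complex.neg_re, ← inner_neg_right, neg_sub]; rfl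
    rw [h3] at h
    have h4 : 0 ≤ (inner ℂ (ulam lam : H) ((y : H) - (ulam lam : H))).re := by
      by_contra hc
      push Not at hc
      nlinarith [sq_nonneg ‖(T (ulam lam) : H) - f‖, mul_neg_of_pos_of_neg hl hc]
    have h5 := sq_nonneg ‖(y : H) - (ulam lam : H)‖
    have h6 := sq_nonneg ‖(ulam lam : H)‖
    refine ⟨?_, by linarith⟩
    have h7 : (inner ℂ (ulam lam : H) ((y : H) - (ulam lam : H))).re ≤ ‖(y : H)‖ ^ 2 := by
      linarith
    have := mul_le_mul_of_nonneg_left h7 hl.le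
    linarith
  -- monotonicity
  have hmono : ∀ lam mu : ℝ, 0 < lam → lam < mu →
      ‖(ulam lam : H) - ulam mu‖ ^ 2 ≤ ‖(ulam lam : H)‖ ^ 2 - ‖(ulam mu : H)‖ ^ 2 := by
    intro lam mu hl hlm
    have ha := hre lam hl (ulam lam - ulam mu)
    have hb := hre mu (hl.trans hlm) (ulam lam - ulam mu)
    rw [T.map_sub] at ha hb
    have e1 : (inner ℂ (T (ulam lam) - f) (T (ulam lam) - T (ulam mu))).re
        - (inner ℂ (T (ulam mu) - f) (T (ulam lam) - T (ulam mu))).re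
        = ‖T (ulam lam) - T (ulam mu)‖ ^ 2 := by
      rw [← hself, ← Complex.sub_re, ← inner_sub_left, sub_sub_sub_cancel_right]
    have e2 : (inner ℂ (ulam lam : H) ((ulam lam : H) - ulam mu)).re
        - (inner ℂ (ulam mu : H) ((ulam lam : H) - ulam mu)).re
        = ‖(ulam lam : H) - ulam mu‖ ^ 2 := by
      rw [← hself, ← Complex.sub_re, ← inner_sub_left]
    rw [Submodule.coe_sub] at ha hb
    have e3 := hsq (ulam lam : H) (ulam mu : H)
    have h4 : 0 ≤ (inner ℂ (ulam mu : H) ((ulam lam : H) - ulam mu)).re := by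
      by_contra hc
      push Not at hc
      have := mul_neg_of_pos_of_neg (sub_pos.2 hlm) hc
      have h8 := mul_nonneg hl.le (sq_nonneg ‖(ulam lam : H) - ulam mu‖)
      rw [← e2] at h8
      nlinarith [sq_nonneg ‖T (ulam lam) - T (ulam mu)‖]
    linarith
  -- Cauchy
  have hC : Cauchy (map (fun lam : ℝ => ((ulam lam : H))) (nhdsWithin 0 (Set.Ioi 0))) := by
    rw [Metric.cauchy_iff]
    refine ⟨inferInstance, fun ε hε => ?_⟩
    let A : Set ℝ := (fun lam => ‖(ulam lam : H)‖ ^ 2) '' Set.Ioi (0 : ℝ)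
    have hAne : A.Nonempty := ⟨_, 1, by simp, rfl⟩
    have hAb : BddAbove A := by
      refine ⟨‖(y : H)‖ ^ 2, ?_⟩
      rintro _ ⟨l, hl, rfl⟩
      exact (hbd l hl).2
    obtain ⟨_, ⟨mu, hmu, rfl⟩, hlt⟩ := exists_lt_of_lt_csSup hAne
      (show sSup A - (ε / 2) ^ 2 < sSup A by have : 0 < (ε / 2) ^ 2 := by positivity
                                             linarith)
    have key : ∀ l ∈ Set.Ioo 0 mu, dist (ulam l : H) (ulam mu) < ε / 2 := by
      intro l hl
      have h1 := hmono l mu hl.1 hl.2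
      have h2 : ‖(ulam l : H)‖ ^ 2 ≤ sSup A := le_csSup hAb ⟨l, hl.1, rfl⟩
      rw [dist_eq_norm]
      refine lt_of_pow_lt_pow_left₀ 2 (by positivity) ?_
      simp only at hlt
      linarith
    refine ⟨(fun lam : ℝ => ((ulam lam : H))) '' Set.Ioo 0 mu,
      image_mem_map (Ioo_mem_nhdsGT hmu), ?_⟩
    rintro _ ⟨l, hl, rfl⟩ _ ⟨m, hm, rfl⟩
    have h1 := dist_triangle_right (ulam l : H) (ulam m) (ulam mu)
    have h2 := key l hl
    have h3 := key m hm
    simp only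
    linarith
  obtain ⟨x, hx⟩ := CompleteSpace.complete hC
  have hx : Tendsto (fun lam : ℝ => ((ulam lam : H))) (nhdsWithin 0 (Set.Ioi 0)) (nhds x) := hx
  have hTx : Tendsto (fun lam : ℝ => (T (ulam lam) : H)) (nhdsWithin 0 (Set.Ioi 0)) (nhds f) := by
    rw [tendsto_iff_norm_sub_tendsto_zero]
    have h1 : Tendsto (fun lam : ℝ => lam * ‖(y : H)‖ ^ 2) (nhdsWithin 0 (Set.Ioi 0))
        (nhds 0) := by
      have : Tendsto (fun lam : ℝ => lam * ‖(y : H)‖ ^ 2) (nhds 0) (nhds (0 * ‖(y : H)‖ ^ 2)) :=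
        (continuous_id.mul continuous_const).tendsto 0
      rw [zero_mul] at this
      exact this.mono_left nhdsWithin_le_nhds
    have h2 : Tendsto (fun lam : ℝ => √(lam * ‖(y : H)‖ ^ 2)) (nhdsWithin 0 (Set.Ioi 0))
        (nhds 0) := by
      have := h1.sqrt
      rwa [Real.sqrt_zero] at this
    refine squeeze_zero' (Eventually.of_forall fun _ => norm_nonneg _) ?_ h2
    filter_upwards [self_mem_nhdsWithin] with l hl
    exact Real.le_sqrt_of_sq_le (hbd l hl).1
  have hmem : (x, f) ∈ T.graph := by
    have hcl : IsClosed (T.graph : Set (H × H)) := hclosed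
    refine hcl.mem_of_tendsto (hx.prodMk_nhds hTx) (Eventually.of_forall fun l => ?_)
    exact T.mem_graph (ulam l)
  obtain ⟨z, hz1, hz2⟩ := (LinearPMap.mem_graph_iff T).1 hmem
  simp only at hz1 hz2
  have horth : ∀ l : ℝ, 0 < l → inner ℂ (ulam l : H) ((y : H) - x) = 0 := by
    intro l hl
    have h := hnormal l hl (y - z)
    rw [T.map_sub, hy, hz2, sub_self, inner_zero_right, zero_add, Submodule.coe_sub, hz1] at h
    exact (mul_eq_zero.1 h).resolve_left (by exact_mod_cast hl.ne')
  have horthx : inner ℂ x ((y : H) - x) = 0 := by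
    have h1 : Tendsto (fun l : ℝ => inner ℂ (ulam l : H) ((y : H) - x))
      (nhdsWithin 0 (Set.Ioi 0)) (nhds (inner ℂ x ((y : H) - x))) := hx.inner tendsto_const_nhds
    refine tendsto_nhds_unique h1 (tendsto_const_nhds.congr' ?_)
    filter_upwards [self_mem_nhdsWithin] with l hl
    exact (horth l hl).symm
  have h1 := hsq (y : H) x
  rw [horthx] at h1
  have h2 := hy_min z hz2
  rw [hz1] at h2
  have h3 : ‖(y : H)‖ ^ 2 ≤ ‖x‖ ^ 2 := by gcongr
  have h4 : ‖(y : H) - x‖ ^ 2 = 0 := by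
    refine le_antisymm ?_ (sq_nonneg _)
    simp only [Complex.zero_re] at h1
    linarith
  have h5 : (y : H) = x := by
    rw [← sub_eq_zero, ← norm_eq_zero]
    exact pow_eq_zero_iff (two_ne_zero) |>.1 h4
  rw [h5]
  exact hx
end
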